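/- Let x_0 ∈ K not lie in the forward orbit {f^i(0) : i ≥ 0} of 0, fix a sequence ζ_2 = −1, ζ_4, ζ_8, … of primitive 2^n-th roots of unity with ζ_{2^n}² = ζ_{2^{n−1}}, and let ℓ be a labeling of the tree of iterated preimages of x_0 (a map from finite words over {a,b} to the algebraic closure with ℓ(empty word) = x_0, f(ℓ(wa)) = f(ℓ(wb)) = ℓ(w), ℓ(wa) = −ℓ(wb)) satisfying (∏_{w ∈ W(r,i)} ℓ(xawa)) / (∏_{w ∈ W(r,i)} ℓ(xbwa)) = ζ_{2^{i+1}} for every word x and every i ≥ 1. Let σ be any automorphism of the algebraic closure of K fixing K pointwise, and let τ ∈ Aut(T_∞) be the induced tree automorphism, i.e., σ(ℓ(w)) = ℓ(τ(w)) for all words w. Then for every word x and every n ≥ 1, σ(ζ_{2^n}) = ζ_{2^n}^m for every integer m congruent to P_r(τ,x) modulo 2^n. In particular, τ ∈ M_{r,∞}; and if every 2-power root of unity lies in K, then τ ∈ B_{r,∞}. -/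

import Mathlib

/-- Nodes of the infinite binary rooted tree `T_∞` are finite words over `{a,b}`,
encoded as `List Bool` with `a = false` and `b = true`; children of `w` are
`w ++ [false]` and `w ++ [true]`. An automorphism of `T_∞`. -/
def IsTreeAut (σ : List Bool → List Bool) : Prop :=
  Function.Bijective σ ∧ (∀ w, (σ w).length = w.length) ∧
    ∀ w s, ∃ t, σ (w ++ [s]) = σ w ++ [t]

/-- The parity `Par(σ,x) ∈ {0,1}`: `0` if `σ(xa) = σ(x)a`, and `1` otherwise. -/
def par (σ : List Bool → List Bool) (x : List Bool) : ℕ :=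
  if σ (x ++ [false]) = σ x ++ [false] then 0 else 1

/-- `W(r,i)`: the words `s₁ ⋯ s_{ri−1}` of length `r*i − 1` over `{a,b}` with
`s_j = a` whenever `r ∣ j`. -/
noncomputable def Wset (r i : ℕ) : Finset (List Bool) :=
  ((Finset.univ : Finset (Fin (r*i-1) → Bool)).filter
    (fun s => ∀ j : Fin (r*i-1), r ∣ (j:ℕ)+1 → s j = false)).image List.ofFn

/-- `Q_r(σ,x) := Σ_{i≥1} 2^i Σ_{w ∈ W(r,i)} Par(σ, xw)` in `ℤ₂`. -/
noncomputable def Qr (r : ℕ) (σ : List Bool → List Bool) (x : List Bool) : ℤ_[2] :=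
  ∑' i : ℕ, (2:ℤ_[2])^(i+1) * ∑ w ∈ Wset r (i+1), (par σ (x ++ w) : ℤ_[2])

/-- `P_r(σ,x) := (−1)^{Par(σ,x)} + Q_r(σ,xb) − Q_r(σ,xa)` in `ℤ₂`. -/
noncomputable def Pr (r : ℕ) (σ : List Bool → List Bool) (x : List Bool) : ℤ_[2] :=
  (-1:ℤ_[2])^(par σ x) + Qr r σ (x ++ [true]) - Qr r σ (x ++ [false])

/-- `M_{r,∞}`: tree automorphisms for which `P_r(σ,·)` is constant. -/
def Mset (r : ℕ) : Set (List Bool → List Bool) :=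
  {σ | IsTreeAut σ ∧ ∀ x₁ x₂ : List Bool, Pr r σ x₁ = Pr r σ x₂}

/-- `B_{r,∞}`: elements of `M_{r,∞}` with common value `P_r(σ) = 1`. -/
def Bset (r : ℕ) : Set (List Bool → List Bool) :=
  {σ | σ ∈ Mset r ∧ Pr r σ [] = 1}

/-!
Let `A_i(y)` be the product of the labels at the nodes `ywa` with `w ∈ W(r,i)` for `i ≥ 1`, and
`A_0(y)` the label of `y`, so that `A_i(xa) = ζ (i+1) * A_i(xb)`. Cutting a word of `W(r,i+1)`
after its `r`-th letter expresses `A_{i+1}(y)` through the values of `A_i`, and `Q_r(τ,y)` through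
the values of `Q_r(τ,·)`, at the nodes `yua` with `|u| = r - 1`. Let `ψ_i : ℤ₂ → L` be the
character sending `1` to `ζ (i+1)`. Each node where `τ` swaps the two children costs one factor
`ψ_i(-1)`, and `ψ_{i+1}(2z) = ψ_i(z)`, so an induction on `i` gives
`σ(A_i(y)) = ψ_i(-Q_r(τ,y)) * A_i(τ(y))`. Comparing this at the two children of `x` yields
`σ(ζ (i+1)) = ψ_i(P_r(τ,x))` for `i ≥ 1`, and squaring the case `i = 1` gives `i = 0`.
-/

section Words

variable {r : ℕ}

lemma mem_Wset {i : ℕ} {w : List Bool} :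
    w ∈ Wset r i ↔ w.length = r * i - 1 ∧ ∀ j, r ∣ j + 1 → w[j]? ≠ some true := by
  simp only [Wset, Finset.mem_image, Finset.mem_filter, Finset.mem_univ, true_and]
  constructor
  · rintro ⟨s, hs, rfl⟩
    refine ⟨List.length_ofFn, fun j hj => ?_⟩
    simp only [List.getElem?_ofFn]
    split_ifs with hlt
    · simp [hs ⟨j, hlt⟩ hj]
    · simp
  · rintro ⟨hlen, hw⟩
    refine ⟨fun j => w[(j : ℕ)], fun j hj => ?_, ?_⟩
    · simpa [hlen] using hw j hj
    · exact List.ext_getElem (by simp [hlen]) (by simp)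

lemma mem_Wset_one {w : List Bool} : w ∈ Wset r 1 ↔ w.length = r - 1 := by
  rw [mem_Wset, mul_one, and_iff_left_iff_imp]
  intro hlen j hj
  have := Nat.le_of_dvd j.succ_pos hj
  rw [List.getElem?_eq_none (by omega)]
  simp

lemma append_false_append_mem_Wset_iff (hr : 1 ≤ r) {i : ℕ} {u w : List Bool}
    (hu : u.length = r - 1) :
    u ++ [false] ++ w ∈ Wset r (i + 2) ↔ w ∈ Wset r (i + 1) := by
  have hu' : (u ++ [false]).length = r := by simp; omega
  have hmul : r * (i + 2) = r * (i + 1) + r := by ring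
  have hpos : r ≤ r * (i + 1) := Nat.le_mul_of_pos_right _ i.succ_pos
  rw [mem_Wset, mem_Wset, List.length_append, hu']
  refine and_congr (by omega) ⟨fun h j hj => ?_, fun h j hj => ?_⟩
  · have := h (r + j) (by rwa [add_assoc, Nat.dvd_add_self_left])
    rwa [List.getElem?_append_right (by omega), hu', Nat.add_sub_cancel_left] at this
  · have hle := Nat.le_of_dvd j.succ_pos hj
    obtain hjr | ⟨k, rfl⟩ : j = u.length ∨ ∃ k, j = r + k :=
      (Nat.lt_or_ge j r).imp (fun _ => by omega) Nat.exists_eq_add_of_le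
    · simp [hjr]
    · rw [List.getElem?_append_right (by omega), hu', Nat.add_sub_cancel_left]
      exact h k (by rwa [add_assoc, Nat.dvd_add_self_left] at hj)

lemma take_append_false_append_drop (hr : 1 ≤ r) {i : ℕ} {v : List Bool}
    (hv : v ∈ Wset r (i + 2)) : v.take (r - 1) ++ [false] ++ v.drop r = v := by
  obtain ⟨hlen, hv⟩ := mem_Wset.1 hv
  have hlt : r - 1 < v.length := by
    have : r * 2 ≤ r * (i + 2) := Nat.mul_le_mul_left r (by omega)
    omega
  have hfalse : v[r - 1] = false := by
    simpa [hlt] using hv (r - 1) (by rw [Nat.sub_add_cancel hr])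
  have hdrop : v.drop (r - 1) = [false] ++ v.drop r := by
    rw [List.drop_eq_getElem_cons hlt, hfalse, Nat.sub_add_cancel hr, List.singleton_append]
  rw [List.append_assoc, ← hdrop, List.take_append_drop]

@[to_additive]
lemma prod_Wset_succ {M : Type*} [CommMonoid M] (hr : 1 ≤ r) (i : ℕ) (F : List Bool → M) :
    ∏ v ∈ Wset r (i + 2), F v =
      ∏ u ∈ Wset r 1, ∏ w ∈ Wset r (i + 1), F (u ++ [false] ++ w) := by
  rw [← Finset.prod_product']
  refine Finset.prod_bij' (fun v _ => (v.take (r - 1), v.drop r))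
    (fun p _ => p.1 ++ [false] ++ p.2) (fun v hv => ?_) (fun p hp => ?_)
    (fun v hv => take_append_false_append_drop hr hv) (fun p hp => ?_) (fun v hv => ?_)
  · have hv' := take_append_false_append_drop hr hv
    have hlen : (v.take (r - 1)).length = r - 1 := by
      have := congrArg List.length hv'
      simp only [List.length_append, List.length_take, List.length_drop,
        List.length_singleton] at this ⊢
      omega
    rw [← hv', append_false_append_mem_Wset_iff hr hlen] at hv
    exact Finset.mem_product.2 ⟨mem_Wset_one.2 hlen, hv⟩
  · obtain ⟨hu, hw⟩ := Finset.mem_product.1 hp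
    exact (append_false_append_mem_Wset_iff hr (mem_Wset_one.1 hu)).2 hw
  · have hu := mem_Wset_one.1 (Finset.mem_product.1 hp).1
    have hu' : (p.1 ++ [false]).length = r := by simp; omega
    refine Prod.ext ?_ (List.drop_left' hu')
    simp only [List.append_assoc]
    exact List.take_left' hu
  · rw [take_append_false_append_drop hr hv]

end Words

section TreeAut

variable {r : ℕ} {τ : List Bool → List Bool}

lemma IsTreeAut.fixes_or_swaps_children (hτ : IsTreeAut τ) (v : List Bool) :
    (par τ v = 0 ∧ ∀ s, τ (v ++ [s]) = τ v ++ [s]) ∨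
      (par τ v = 1 ∧ ∀ s, τ (v ++ [s]) = τ v ++ [!s]) := by
  obtain ⟨s, hs⟩ := hτ.2.2 v false
  obtain ⟨t, ht⟩ := hτ.2.2 v true
  have hst : s ≠ t := by
    rintro rfl
    simpa using hτ.1.1 (hs.trans ht.symm)
  cases s <;> cases t <;> simp_all [par]

lemma IsTreeAut.exists_append (hτ : IsTreeAut τ) (y u : List Bool) :
    ∃ v, v.length = u.length ∧ τ (y ++ u) = τ y ++ v := by
  induction u using List.reverseRecOn with
  | nil => exact ⟨[], by simp⟩
  | append_singleton u s ih =>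
    obtain ⟨v, hv, h⟩ := ih
    obtain ⟨t, ht⟩ := hτ.2.2 (y ++ u) s
    exact ⟨v ++ [t], by simp [hv], by rw [← List.append_assoc, ht, h, List.append_assoc]⟩

lemma IsTreeAut.prod_Wset_one {M : Type*} [CommMonoid M] (hτ : IsTreeAut τ) (y : List Bool)
    (F : List Bool → M) :
    ∏ u ∈ Wset r 1, F (τ (y ++ u)) = ∏ u ∈ Wset r 1, F (τ y ++ u) := by
  choose v hlen hv using hτ.exists_append y
  have hmaps : Set.MapsTo v (Wset r 1) (Wset r 1) := fun u hu =>
    mem_Wset_one.2 ((hlen u).trans (mem_Wset_one.1 hu))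
  have hinj : Function.Injective v := fun u u' h =>
    List.append_cancel_left (hτ.1.1 (by rw [hv, hv, h]))
  exact Finset.prod_nbij v hmaps hinj.injOn
    (Finset.surjOn_of_injOn_of_card_le v hmaps hinj.injOn le_rfl) fun u _ => by rw [hv]

end TreeAut

section Series

lemma summable_prime_pow_mul {p : ℕ} [Fact p.Prime] (a : ℕ → ℤ_[p]) :
    Summable fun i => (p : ℤ_[p]) ^ i * a i := by
  have hp : ‖(p : ℤ_[p])‖ < 1 := PadicInt.mem_nonunits.1 PadicInt.p_nonunit
  refine Summable.of_norm_bounded (summable_geometric_of_lt_one (norm_nonneg _) hp) fun i => ?_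
  rw [norm_mul, norm_pow]
  exact mul_le_of_le_one_right (by positivity) (PadicInt.norm_le_one _)

variable {r : ℕ}

lemma summable_Qr (τ : List Bool → List Bool) (y : List Bool) :
    Summable fun i => (2 : ℤ_[2]) ^ (i + 1) * ∑ w ∈ Wset r (i + 1), (par τ (y ++ w) : ℤ_[2]) := by
  have h := (summable_prime_pow_mul (p := 2)
    fun i => ∑ w ∈ Wset r (i + 1), (par τ (y ++ w) : ℤ_[2])).mul_left 2
  simpa only [Nat.cast_ofNat, ← mul_assoc, ← pow_succ'] using h

lemma Qr_eq_two_mul_sum (hr : 1 ≤ r) (τ : List Bool → List Bool) (y : List Bool) :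
    Qr r τ y = 2 * ∑ u ∈ Wset r 1, ((par τ (y ++ u) : ℤ_[2]) + Qr r τ (y ++ u ++ [false])) := by
  have hstep (i : ℕ) :
      (2 : ℤ_[2]) ^ (i + 2) * ∑ w ∈ Wset r (i + 2), (par τ (y ++ w) : ℤ_[2]) =
        2 * ∑ u ∈ Wset r 1, (2 : ℤ_[2]) ^ (i + 1) *
          ∑ w ∈ Wset r (i + 1), (par τ (y ++ u ++ [false] ++ w) : ℤ_[2]) := by
    rw [sum_Wset_succ hr, ← Finset.mul_sum, ← mul_assoc, ← pow_succ']
    simp only [List.append_assoc]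
  rw [Qr, (summable_Qr τ y).tsum_eq_zero_add, Finset.sum_add_distrib, mul_add]
  refine congrArg₂ (· + ·) (by simp) ?_
  have hsum : ∀ u ∈ Wset r 1, Summable fun i => (2 : ℤ_[2]) ^ (i + 1) *
      ∑ w ∈ Wset r (i + 1), (par τ (y ++ u ++ [false] ++ w) : ℤ_[2]) :=
    fun u _ => summable_Qr τ (y ++ u ++ [false])
  rw [tsum_congr hstep, (summable_sum hsum).tsum_mul_left, Summable.tsum_finsetSum hsum]
  rfl

end Series

lemma addChar_map_sum {A M ι : Type*} [AddCommMonoid A] [CommMonoid M] (ψ : AddChar A M)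
    (s : Finset ι) (f : ι → A) : ψ (∑ i ∈ s, f i) = ∏ i ∈ s, ψ (f i) :=
  map_prod ψ.toMonoidHom (fun i => Multiplicative.ofAdd (f i)) s

section RootTower

variable {L : Type*} [DivisionCommMonoid L] {p : ℕ} {ζ : ℕ → L}

/-- A compatible system `ζ 1, ζ 2, …` of primitive `p^n`-th roots of unity; the value `ζ 0` is
irrelevant. -/
structure IsRootTower (p : ℕ) (ζ : ℕ → L) : Prop where
  primitive : ∀ n, 1 ≤ n → IsPrimitiveRoot (ζ n) (p ^ n)
  pow_eq : ∀ n, 2 ≤ n → ζ n ^ p = ζ (n - 1)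

namespace IsRootTower

variable [Fact p.Prime]

/-- The additive character `z ↦ ζ (n+1) ^ z` of `ℤ_p`, which gives a meaning to `p`-adic exponents
of a root of unity; it factors through `ℤ/p^(n+1)`. -/
noncomputable def char (hζ : IsRootTower p ζ) (n : ℕ) : AddChar ℤ_[p] L :=
  (AddChar.zmodChar (p ^ (n + 1)) (hζ.primitive (n + 1) n.succ_pos).pow_eq_one).compAddMonoidHom
    (PadicInt.toZModPow (n + 1)).toAddMonoidHom

lemma char_one (hζ : IsRootTower p ζ) (n : ℕ) : hζ.char n 1 = ζ (n + 1) := by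
  have := AddChar.zmodChar_apply' (hζ.primitive (n + 1) n.succ_pos).pow_eq_one 1
  simpa [char] using this

lemma char_intCast (hζ : IsRootTower p ζ) (n : ℕ) (m : ℤ) : hζ.char n m = ζ (n + 1) ^ m := by
  rw [← zsmul_one, AddChar.map_zsmul_eq_zpow, char_one]

lemma char_eq_iff (hζ : IsRootTower p ζ) {n : ℕ} {z z' : ℤ_[p]} :
    hζ.char n z = hζ.char n z' ↔
      PadicInt.toZModPow (n + 1) z = PadicInt.toZModPow (n + 1) z' := by
  refine ⟨fun h => ZMod.val_injective _ ?_, fun h => ?_⟩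
  · exact (hζ.primitive (n + 1) n.succ_pos).pow_inj (ZMod.val_lt _) (ZMod.val_lt _) h
  · exact congrArg (fun a : ZMod (p ^ (n + 1)) => ζ (n + 1) ^ a.val) h

lemma char_eq_zpow (hζ : IsRootTower p ζ) {n : ℕ} {z : ℤ_[p]} {m : ℤ}
    (h : (p : ℤ_[p]) ^ (n + 1) ∣ m - z) : hζ.char n z = ζ (n + 1) ^ m := by
  rw [← hζ.char_intCast, eq_comm, hζ.char_eq_iff, ← sub_eq_zero, ← map_sub, ← RingHom.mem_ker,
    PadicInt.ker_toZModPow]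
  exact Ideal.mem_span_singleton.2 h

lemma char_succ_prime_mul (hζ : IsRootTower p ζ) (n : ℕ) (z : ℤ_[p]) :
    hζ.char (n + 1) (p * z) = hζ.char n z := by
  obtain ⟨m, hm⟩ : ∃ m : ℤ, (p : ℤ_[p]) ^ (n + 2) ∣ m - z :=
    ⟨z.appr (n + 2), by
      simpa [dvd_sub_comm] using Ideal.mem_span_singleton.1 (PadicInt.appr_spec (n + 2) z)⟩
  calc hζ.char (n + 1) (p * z) = hζ.char (n + 1) z ^ p := by
        rw [← nsmul_eq_mul, AddChar.map_nsmul_eq_pow]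
    _ = (ζ (n + 2) ^ p) ^ m := by
        rw [hζ.char_eq_zpow hm, ← zpow_natCast, zpow_comm, zpow_natCast]
    _ = hζ.char n z := by
        rw [hζ.pow_eq _ (Nat.le_add_left 2 n),
          hζ.char_eq_zpow ((pow_dvd_pow _ (n + 1).le_succ).trans hm)]
        rfl

lemma char_zero_prime_mul (hζ : IsRootTower p ζ) (z : ℤ_[p]) : hζ.char 0 (p * z) = 1 := by
  have h := hζ.char_eq_zpow (n := 0) (z := p * z) (m := 0) (by simp)
  rwa [zpow_zero] at h

lemma eq_of_forall_char_eq (hζ : IsRootTower p ζ) {z z' : ℤ_[p]}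
    (h : ∀ n, hζ.char n z = hζ.char n z') : z = z' := by
  refine PadicInt.ext_of_toZModPow.1 fun n => ?_
  rw [← PadicInt.cast_toZModPow n (n + 1) n.le_succ, hζ.char_eq_iff.1 (h n),
    PadicInt.cast_toZModPow n (n + 1) n.le_succ]

end IsRootTower

end RootTower

section Labeling

/-- The product of the labels at the nodes `ywa` with `w ∈ W(r,i)` if `i ≥ 1`, and the label of `y`
itself if `i = 0`. It is defined by recursion along the blocks of `r` letters, see
`labelProd_succ`. -/
noncomputable def labelProd {M : Type*} [CommMonoid M] (r : ℕ) (ℓ : List Bool → M) :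
    ℕ → List Bool → M
  | 0, y => ℓ y
  | i + 1, y => ∏ u ∈ Wset r 1, labelProd r ℓ i (y ++ u ++ [false])

lemma labelProd_succ {M : Type*} [CommMonoid M] {r : ℕ} (hr : 1 ≤ r) (ℓ : List Bool → M) (i : ℕ)
    (y : List Bool) :
    labelProd r ℓ (i + 1) y = ∏ w ∈ Wset r (i + 1), ℓ (y ++ w ++ [false]) := by
  induction i generalizing y with
  | zero => rfl
  | succ i ih =>
    rw [labelProd, prod_Wset_succ hr]
    simp only [ih, List.append_assoc]

variable {L : Type*} [Field L] {r : ℕ} {ζ : ℕ → L} {ℓ : List Bool → L}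

/-- A labeling of the tree in which the two children of a node have opposite labels and the
products over `W(r,i)` attached to them have ratio `ζ (i+1)`. -/
structure IsNormalizedLabeling (r : ℕ) (ζ : ℕ → L) (ℓ : List Bool → L) : Prop where
  neg : ∀ w, ℓ (w ++ [false]) = -ℓ (w ++ [true])
  ratio : ∀ x i, 1 ≤ i →
    (∏ w ∈ Wset r i, ℓ (x ++ [false] ++ w ++ [false])) /
      (∏ w ∈ Wset r i, ℓ (x ++ [true] ++ w ++ [false])) = ζ (i + 1)

namespace IsNormalizedLabeling

lemma labelProd_ne_zero (hℓ : IsNormalizedLabeling r ζ ℓ) (hr : 1 ≤ r) (hζ : IsRootTower 2 ζ)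
    (i : ℕ) (x : List Bool) (s : Bool) : labelProd r ℓ (i + 1) (x ++ [s]) ≠ 0 := by
  have hne : ζ (i + 2) ≠ 0 := (hζ.primitive (i + 2) (by omega)).ne_zero (by positivity)
  rw [← hℓ.ratio x (i + 1) i.succ_pos, ← labelProd_succ hr, ← labelProd_succ hr,
    div_ne_zero_iff] at hne
  cases s
  exacts [hne.1, hne.2]

lemma labelProd_false (hℓ : IsNormalizedLabeling r ζ ℓ) (hr : 1 ≤ r) (hζ : IsRootTower 2 ζ) (i : ℕ)
    (x : List Bool) :
    labelProd r ℓ i (x ++ [false]) = ζ (i + 1) * labelProd r ℓ i (x ++ [true]) := by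
  cases i with
  | zero =>
    have hζ1 : ζ 1 = -1 := (hζ.primitive 1 le_rfl).eq_neg_one_of_two_right
    simp only [labelProd, zero_add, hζ1, neg_one_mul, hℓ.neg]
  | succ i =>
    rw [← div_eq_iff (hℓ.labelProd_ne_zero hr hζ i x true), labelProd_succ hr, labelProd_succ hr]
    exact hℓ.ratio x (i + 1) i.succ_pos

variable {τ : List Bool → List Bool}

lemma labelProd_apply_append_false (hℓ : IsNormalizedLabeling r ζ ℓ) (hr : 1 ≤ r)
    (hζ : IsRootTower 2 ζ) (hτ : IsTreeAut τ) (i : ℕ) (v : List Bool) :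
    labelProd r ℓ i (τ (v ++ [false])) =
      hζ.char i (-par τ v) * labelProd r ℓ i (τ v ++ [false]) := by
  obtain ⟨hpar, h⟩ | ⟨hpar, h⟩ := hτ.fixes_or_swaps_children v
  · simp [hpar, h]
  · have hne : ζ (i + 1) ≠ 0 := (hζ.primitive (i + 1) i.succ_pos).ne_zero (by positivity)
    rw [hpar, h, hℓ.labelProd_false hr hζ, Nat.cast_one, AddChar.map_neg_eq_inv, hζ.char_one,
      inv_mul_cancel_left₀ hne, Bool.not_false]

lemma labelProd_apply_false_eq_mul_true (hℓ : IsNormalizedLabeling r ζ ℓ) (hr : 1 ≤ r)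
    (hζ : IsRootTower 2 ζ) (hτ : IsTreeAut τ) (i : ℕ) (v : List Bool) :
    labelProd r ℓ i (τ (v ++ [false])) =
      hζ.char i ((-1) ^ par τ v) * labelProd r ℓ i (τ (v ++ [true])) := by
  obtain ⟨hpar, h⟩ | ⟨hpar, h⟩ := hτ.fixes_or_swaps_children v
  · rw [hpar, h, h, hℓ.labelProd_false hr hζ, pow_zero, hζ.char_one]
  · have hne : ζ (i + 1) ≠ 0 := (hζ.primitive (i + 1) i.succ_pos).ne_zero (by positivity)
    rw [hpar, h, h, Bool.not_false, Bool.not_true, hℓ.labelProd_false hr hζ, pow_one,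
      AddChar.map_neg_eq_inv, hζ.char_one, inv_mul_cancel_left₀ hne]

theorem map_labelProd (hℓ : IsNormalizedLabeling r ζ ℓ) (hr : 1 ≤ r) (hζ : IsRootTower 2 ζ)
    (hτ : IsTreeAut τ) (σ : L →* L) (hσ : ∀ w, σ (ℓ w) = ℓ (τ w)) (i : ℕ) (y : List Bool) :
    σ (labelProd r ℓ i y) = hζ.char i (-Qr r τ y) * labelProd r ℓ i (τ y) := by
  induction i generalizing y with
  | zero =>
    have h := hζ.char_zero_prime_mul
      (-∑ u ∈ Wset r 1, ((par τ (y ++ u) : ℤ_[2]) + Qr r τ (y ++ u ++ [false])))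
    rw [Nat.cast_ofNat, mul_neg, ← Qr_eq_two_mul_sum hr] at h
    rw [h, one_mul, labelProd, hσ, labelProd]
  | succ i ih =>
    have hstep (u : List Bool) : σ (labelProd r ℓ i (y ++ u ++ [false])) =
        hζ.char i (-(par τ (y ++ u) + Qr r τ (y ++ u ++ [false]))) *
          labelProd r ℓ i (τ (y ++ u) ++ [false]) := by
      rw [ih, hℓ.labelProd_apply_append_false hr hζ hτ, neg_add_rev, AddChar.map_add_eq_mul,
        mul_assoc]
    calc σ (labelProd r ℓ (i + 1) y)
        = hζ.char i (-∑ u ∈ Wset r 1, (par τ (y ++ u) + Qr r τ (y ++ u ++ [false]))) *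
            ∏ u ∈ Wset r 1, labelProd r ℓ i (τ (y ++ u) ++ [false]) := by
          simp only [labelProd, map_prod, hstep, Finset.prod_mul_distrib, ← addChar_map_sum,
            Finset.sum_neg_distrib]
      _ = hζ.char (i + 1) (-Qr r τ y) * labelProd r ℓ (i + 1) (τ y) := by
          rw [← hζ.char_succ_prime_mul, Nat.cast_ofNat, mul_neg, ← Qr_eq_two_mul_sum hr,
            hτ.prod_Wset_one y fun v => labelProd r ℓ i (v ++ [false]), labelProd]

lemma map_root_add_two (hℓ : IsNormalizedLabeling r ζ ℓ) (hr : 1 ≤ r) (hζ : IsRootTower 2 ζ)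
    (hτ : IsTreeAut τ) (σ : L →* L) (hσ : ∀ w, σ (ℓ w) = ℓ (τ w)) (n : ℕ) (x : List Bool) :
    σ (ζ (n + 2)) = hζ.char (n + 1) (Pr r τ x) := by
  set ψ := hζ.char (n + 1)
  have hB : labelProd r ℓ (n + 1) (τ (x ++ [true])) ≠ 0 := by
    obtain ⟨t, ht⟩ := hτ.2.2 x true
    rw [ht]
    exact hℓ.labelProd_ne_zero hr hζ n (τ x) t
  have hmap := congrArg σ (hℓ.labelProd_false hr hζ (n + 1) x)
  rw [map_mul, hℓ.map_labelProd hr hζ hτ σ hσ, hℓ.map_labelProd hr hζ hτ σ hσ,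
    hℓ.labelProd_apply_false_eq_mul_true hr hζ hτ] at hmap
  have hinv : ψ (Qr r τ (x ++ [true])) * ψ (-Qr r τ (x ++ [true])) = 1 := by
    rw [← AddChar.map_add_eq_mul, add_neg_cancel, AddChar.map_zero_eq_one]
  rw [Pr, sub_eq_add_neg, AddChar.map_add_eq_mul, AddChar.map_add_eq_mul]
  refine mul_right_cancel₀ hB ?_
  linear_combination -ψ (Qr r τ (x ++ [true])) * hmap -
    σ (ζ (n + 2)) * labelProd r ℓ (n + 1) (τ (x ++ [true])) * hinv

theorem map_root (hℓ : IsNormalizedLabeling r ζ ℓ) (hr : 1 ≤ r) (hζ : IsRootTower 2 ζ)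
    (hτ : IsTreeAut τ) (σ : L →* L) (hσ : ∀ w, σ (ℓ w) = ℓ (τ w)) (n : ℕ) (x : List Bool) :
    σ (ζ (n + 1)) = hζ.char n (Pr r τ x) := by
  have hsq : ζ (n + 2) ^ 2 = ζ (n + 1) := hζ.pow_eq (n + 2) (Nat.le_add_left 2 n)
  rw [← hsq, map_pow, hℓ.map_root_add_two hr hζ hτ σ hσ, ← AddChar.map_nsmul_eq_pow,
    nsmul_eq_mul, hζ.char_succ_prime_mul]

end IsNormalizedLabeling

end Labeling

theorem galois_action_on_roots_of_unity_general {L : Type*} [Field L] {r : ℕ} (hr : 1 ≤ r)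
    {ζ : ℕ → L} (hζ : IsRootTower 2 ζ) {ℓ : List Bool → L} (hℓ : IsNormalizedLabeling r ζ ℓ)
    (σ : L →* L) {τ : List Bool → List Bool} (hτ : IsTreeAut τ) (hσ : ∀ w, σ (ℓ w) = ℓ (τ w)) :
    (∀ (x : List Bool) (n : ℕ), 1 ≤ n → ∀ m : ℤ,
      (2 : ℤ_[2]) ^ n ∣ ((m : ℤ_[2]) - Pr r τ x) → σ (ζ n) = ζ n ^ m) ∧
    τ ∈ Mset r ∧
    ((∀ n, 1 ≤ n → σ (ζ n) = ζ n) → τ ∈ Bset r) := by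
  have hmap := hℓ.map_root hr hζ hτ σ hσ
  have hM : τ ∈ Mset r := ⟨hτ, fun x₁ x₂ =>
    hζ.eq_of_forall_char_eq fun n => (hmap n x₁).symm.trans (hmap n x₂)⟩
  refine ⟨fun x n hn m hm => ?_, hM, fun hfix => ⟨hM, hζ.eq_of_forall_char_eq fun n => ?_⟩⟩
  · obtain ⟨n, rfl⟩ := Nat.exists_eq_succ_of_ne_zero (Nat.one_le_iff_ne_zero.1 hn)
    rw [hmap n x, hζ.char_eq_zpow (by exact_mod_cast hm)]
  · rw [← hmap, hfix _ n.succ_pos, hζ.char_one]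

/-- `K` a field of characteristic `≠ 2`, `f(z) = z² + c ∈ K[z]` with
`f^r(0) = 0` for a minimal `r ≥ 1`; `x₀ ∈ K` not in the forward orbit of `0`;
`ζ 1 = −1, ζ 2, …` a compatible sequence of primitive `2^n`-th roots of unity; and `ℓ` a
labeling of the preimage tree of `x₀` satisfying
`(∏_{w ∈ W(r,i)} ℓ(xawa))/(∏_{w ∈ W(r,i)} ℓ(xbwa)) = ζ (i+1)` for all `x` and `i ≥ 1`.
Let `σ` be an automorphism of the algebraic closure fixing `K` pointwise, and let `τ` be
the induced tree automorphism, i.e. `σ(ℓ(w)) = ℓ(τ(w))` for all words `w`. Then for every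
word `x` and every `n ≥ 1`, `σ(ζ n) = (ζ n)^m` for every integer `m` congruent to
`P_r(τ,x)` modulo `2^n`. In particular `τ ∈ M_{r,∞}`; and if every `2`-power root of
unity lies in `K`, then `τ ∈ B_{r,∞}`. -/
theorem galois_action_on_roots_of_unity (K : Type*) [Field K] (hchar : ringChar K ≠ 2)
    (c : K) (r : ℕ) (hr : 1 ≤ r)
    (hper : (fun z : K => z ^ 2 + c)^[r] 0 = 0)
    (hmin : ∀ j : ℕ, 1 ≤ j → j < r → (fun z : K => z ^ 2 + c)^[j] 0 ≠ 0)
    (x₀ : K)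
    (hx₀ : ∀ i : ℕ, (fun z : K => z ^ 2 + c)^[i] 0 ≠ x₀)
    (ζ : ℕ → AlgebraicClosure K)
    (hζ1 : ζ 1 = -1)
    (hζprim : ∀ n : ℕ, 1 ≤ n → IsPrimitiveRoot (ζ n) (2 ^ n))
    (hζsq : ∀ n : ℕ, 2 ≤ n → (ζ n) ^ 2 = ζ (n-1))
    (ℓ : List Bool → AlgebraicClosure K)
    (hroot : ℓ [] = algebraMap K (AlgebraicClosure K) x₀)
    (hpreim : ∀ (w : List Bool) (s : Bool),
      (ℓ (w ++ [s])) ^ 2 + algebraMap K (AlgebraicClosure K) c = ℓ w)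
    (hneg : ∀ w : List Bool, ℓ (w ++ [false]) = - ℓ (w ++ [true]))
    (hprod : ∀ (x : List Bool) (i : ℕ), 1 ≤ i →
      (∏ w ∈ Wset r i, ℓ (x ++ [false] ++ w ++ [false])) /
        (∏ w ∈ Wset r i, ℓ (x ++ [true] ++ w ++ [false])) = ζ (i+1))
    (σ : AlgebraicClosure K ≃ₐ[K] AlgebraicClosure K)
    (τ : List Bool → List Bool) (hτ : IsTreeAut τ)
    (hcompat : ∀ w : List Bool, σ (ℓ w) = ℓ (τ w)) :
    (∀ (x : List Bool) (n : ℕ), 1 ≤ n → ∀ m : ℤ,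
      (2:ℤ_[2])^n ∣ ((m : ℤ_[2]) - Pr r τ x) → σ (ζ n) = (ζ n) ^ m) ∧
    τ ∈ Mset r ∧
    ((∀ u : AlgebraicClosure K, (∃ n : ℕ, u ^ (2^n) = 1) →
        u ∈ Set.range (algebraMap K (AlgebraicClosure K))) → τ ∈ Bset r) := by
  obtain ⟨hact, hM, hB⟩ := galois_action_on_roots_of_unity_general hr ⟨hζprim, hζsq⟩
    ⟨hneg, hprod⟩ (σ : AlgebraicClosure K →* AlgebraicClosure K) hτ hcompat
  exact ⟨hact, hM, fun hu => hB fun n hn =>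
    (hu (ζ n) ⟨n, (hζprim n hn).pow_eq_one⟩).elim fun a ha => ha ▸ σ.commutes a⟩
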